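/- For every subset P ⊆ [0,1] and every HyperLTL_prop formula ψ, there exists a HyperLTL formula Bool(ψ,P) (i.e. a HyperLTL_prop formula using only the interpreted Boolean functions max, min and x ↦ 1−x) with the same free variables, such that for every nonempty set T of Boolean traces and every trace assignment Π into Boolean traces: ⟦ψ⟧_Π^T ∈ P if and only if ⟦Bool(ψ,P)⟧_Π^T = 1. -/

import Mathlib

open Set

noncomputable section

/-- A (weighted) trace assigns to each time step and atomic proposition a weight in `[0,1]`. -/
abbrev Trace (AP : Type) : Type := ℕ → AP → unitInterval

/-- Boolean traces: all weights are `0` or `1`. -/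
def IsBoolTrace {AP : Type} (t : Trace AP) : Prop :=
  ∀ i p, (t i p : ℝ) = 0 ∨ (t i p : ℝ) = 1

/-- The traces whose weights all belong to `W` (the set `𝕋_W`). -/
def TracesW {AP : Type} (W : Set ℝ) : Set (Trace AP) :=
  {t | ∀ i p, (t i p : ℝ) ∈ W}

/-- Shifting a trace assignment: `Π[i,∞]`. -/
def shiftA {AP Var : Type} (ρ : Var → Trace AP) (i : ℕ) : Var → Trace AP :=
  fun π n => ρ π (n + i)

/-- `prefMin g i = min_{0 ≤ j < i} g j` (with the empty minimum being `1`). -/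
def prefMin (g : ℕ → ℝ) : ℕ → ℝ
  | 0 => 1
  | n + 1 => min (prefMin g n) (g n)

/-- A signature of function symbols, each interpreted as a map `[0,1]^k → [0,1]`. -/
structure PropSig where
  Fn : Type
  arity : Fn → ℕ
  interp : (f : Fn) → (Fin (arity f) → ℝ) → ℝ
  interp_mem : ∀ (f : Fn) (x : Fin (arity f) → ℝ),
      (∀ i, x i ∈ Set.Icc (0:ℝ) 1) → interp f x ∈ Set.Icc (0:ℝ) 1

/-- Quantifier-free HyperLTL_prop formulas. -/
inductive PropQF (AP Var : Type) (S : PropSig) : Type where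
  | tt : PropQF AP Var S
  | ff : PropQF AP Var S
  | atom : AP → Var → PropQF AP Var S
  | app : (f : S.Fn) → (Fin (S.arity f) → PropQF AP Var S) → PropQF AP Var S
  | next : PropQF AP Var S → PropQF AP Var S
  | untl : PropQF AP Var S → PropQF AP Var S → PropQF AP Var S

/-- HyperLTL_prop formulas: a prefix of quantifiers over a quantifier-free formula. -/
inductive PropForm (AP Var : Type) (S : PropSig) : Type where
  | qf : PropQF AP Var S → PropForm AP Var S
  | ex : Var → PropForm AP Var S → PropForm AP Var S
  | all : Var → PropForm AP Var S → PropForm AP Var S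

variable {AP Var : Type} {S : PropSig}

/-- Satisfaction value of quantifier-free formulas. -/
def semQF : PropQF AP Var S → (Var → Trace AP) → Set (Trace AP) → ℝ
  | .tt, _, _ => 1
  | .ff, _, _ => 0
  | .atom p π, ρ, _ => (ρ π 0 p : ℝ)
  | .app f args, ρ, T => S.interp f fun i => semQF (args i) ρ T
  | .next φ, ρ, T => semQF φ (shiftA ρ 1) T
  | .untl φ₁ φ₂, ρ, T =>
      ⨆ i : ℕ, min (semQF φ₂ (shiftA ρ i) T)
        (prefMin (fun j => semQF φ₁ (shiftA ρ j) T) i)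

/-- Satisfaction value `⟦ψ⟧_Π^T` of HyperLTL_prop formulas. -/
def sem [DecidableEq Var] :
    PropForm AP Var S → (Var → Trace AP) → Set (Trace AP) → ℝ
  | .qf φ, ρ, T => semQF φ ρ T
  | .ex π ψ, ρ, T => sSup ((fun t => sem ψ (Function.update ρ π t) T) '' T)
  | .all π ψ, ρ, T => sInf ((fun t => sem ψ (Function.update ρ π t) T) '' T)

/-- The Boolean function symbols: `max`, `min`, and `x ↦ 1 - x`. -/
inductive BoolFn : Type where
  | neg : BoolFn
  | bmax : BoolFn
  | bmin : BoolFn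

def barity : BoolFn → ℕ
  | .neg => 1
  | .bmax => 2
  | .bmin => 2

def binterp : (f : BoolFn) → (Fin (barity f) → ℝ) → ℝ
  | .neg, x => 1 - x ⟨0, by simp [barity]⟩
  | .bmax, x => max (x ⟨0, by simp [barity]⟩) (x ⟨1, by simp [barity]⟩)
  | .bmin, x => min (x ⟨0, by simp [barity]⟩) (x ⟨1, by simp [barity]⟩)

/-- The signature of HyperLTL formulas: only `max`, `min` and `x ↦ 1 - x`. -/
def boolSig : PropSig where
  Fn := BoolFn
  arity := barity
  interp := binterp
  interp_mem := by
    intro f x hx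
    cases f with
    | neg =>
        have h0 := hx ⟨0, by simp [barity]⟩
        simp only [binterp, Set.mem_Icc] at *
        constructor <;> linarith [h0.1, h0.2]
    | bmax =>
        have h0 := hx ⟨0, by simp [barity]⟩
        have h1 := hx ⟨1, by simp [barity]⟩
        simp only [binterp, Set.mem_Icc] at *
        exact ⟨le_max_of_le_left h0.1, max_le h0.2 h1.2⟩
    | bmin =>
        have h0 := hx ⟨0, by simp [barity]⟩
        have h1 := hx ⟨1, by simp [barity]⟩
        simp only [binterp, Set.mem_Icc] at *
        exact ⟨le_min h0.1 h1.1, min_le_of_left_le h0.2⟩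

/-- The variables occurring in a quantifier-free formula. -/
def varsQF {AP Var : Type} {S : PropSig} : PropQF AP Var S → Set Var
  | .tt => ∅
  | .ff => ∅
  | .atom _ π => {π}
  | .app _ args => ⋃ i, varsQF (args i)
  | .next φ => varsQF φ
  | .untl φ₁ φ₂ => varsQF φ₁ ∪ varsQF φ₂

/-- The free variables of a formula. -/
def freeVars {AP Var : Type} {S : PropSig} : PropForm AP Var S → Set Var
  | .qf φ => varsQF φ
  | .ex π ψ => freeVars ψ \ {π}
  | .all π ψ => freeVars ψ \ {π}

/-!
Over Boolean traces a formula takes only finitely many values: atoms evaluate to `0` or `1`, the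
value of `φ₁ U φ₂` is `1` or a value of `φ₁` or `φ₂`, and suprema and infima of finitely many values
are attained. For the same reason `v ≤ ⟦φ₁ U φ₂⟧` and `v ≤ ⟦∃π ψ⟧`, `v ≤ ⟦∀π ψ⟧` have their Boolean
meaning in terms of `v ≤ ⟦φ₁⟧`, `v ≤ ⟦φ₂⟧`, `v ≤ ⟦ψ⟧`. The superlevel sets of the value therefore
determine all of its preimages through finite Boolean combinations, while a function symbol is
handled by enumerating the finitely many tuples of values of its arguments. HyperLTL formulas are
prenex, so for conjunctions of quantified formulas the quantifiers are pulled to the front after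
renaming the bound variables to fresh ones.
-/

section FiniteRange

theorem le_ciSup_iff_of_finite_range {ι α : Type*} [ConditionallyCompleteLinearOrder α]
    [Nonempty ι] {f : ι → α} (hf : (range f).Finite) {a : α} : a ≤ ⨆ i, f i ↔ ∃ i, a ≤ f i := by
  constructor
  · intro h
    obtain ⟨i, hi⟩ := (range_nonempty f).csSup_mem hf
    exact ⟨i, h.trans hi.ge⟩
  · rintro ⟨i, hi⟩
    exact hi.trans (le_ciSup hf.bddAbove i)

variable {X α : Type*} {K : Set (Set X)} {g : X → α}

theorem preimage_mem_of_fiber_mem (hK : MeasureTheory.IsSetAlgebra K) (hg : (range g).Finite)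
    (hfiber : ∀ a ∈ range g, g ⁻¹' {a} ∈ K) (P : Set α) : g ⁻¹' P ∈ K := by
  have hunion : g ⁻¹' P = ⋃ a ∈ (hg.inter_of_left P).toFinset, g ⁻¹' {a} := by
    ext x
    simp
  rw [hunion]
  refine hK.biUnion_mem _ fun a ha => hfiber a ?_
  exact ((hg.inter_of_left P).mem_toFinset.1 ha).1

theorem preimage_mem_of_superlevel_mem [LinearOrder α] (hK : MeasureTheory.IsSetAlgebra K)
    (hg : (range g).Finite) (hsup : ∀ a ∈ range g, g ⁻¹' Ici a ∈ K) (P : Set α) :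
    g ⁻¹' P ∈ K := by
  refine preimage_mem_of_fiber_mem hK hg (fun a ha => ?_) P
  have hlevel : g ⁻¹' {a} =
      g ⁻¹' Ici a \ ⋃ b ∈ (hg.inter_of_left (Ioi a)).toFinset, g ⁻¹' Ici b := by
    ext x
    simp only [mem_preimage, mem_singleton_iff, mem_sdiff, mem_Ici, mem_iUnion,
      Finite.mem_toFinset, mem_inter_iff, mem_Ioi, exists_prop, not_exists, not_and, not_le]
    constructor
    · rintro rfl
      exact ⟨le_rfl, fun b hb => hb.2⟩
    · rintro ⟨hle, hlt⟩
      exact (hle.eq_of_not_lt fun h => (hlt _ ⟨mem_range_self x, h⟩).false).symm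
  rw [hlevel]
  refine hK.sdiff_mem (hsup a ha) (hK.biUnion_mem _ fun b hb => hsup b ?_)
  exact ((hg.inter_of_left (Ioi a)).mem_toFinset.1 hb).1

end FiniteRange

section PrefMin

variable {g g₁ g₂ : ℕ → ℝ} {v : ℝ}

theorem le_prefMin_iff (hv : v ≤ 1) (i : ℕ) : v ≤ prefMin g i ↔ ∀ j < i, v ≤ g j := by
  induction i with
  | zero => simpa [prefMin]
  | succ n ih => simp only [prefMin, le_min_iff, ih, Nat.forall_lt_succ_right]

theorem prefMin_mem_insert_one_range (g : ℕ → ℝ) (i : ℕ) : prefMin g i ∈ insert 1 (range g) := by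
  induction i with
  | zero => exact mem_insert _ _
  | succ n ih => exact min_rec' (· ∈ insert 1 (range g)) ih (.inr (mem_range_self n))

theorem range_min_prefMin_subset (g₁ g₂ : ℕ → ℝ) :
    range (fun i => min (g₂ i) (prefMin g₁ i)) ⊆ insert 1 (range g₁ ∪ range g₂) := by
  rintro _ ⟨i, rfl⟩
  refine min_rec' (· ∈ insert 1 (range g₁ ∪ range g₂)) (.inr (.inr (mem_range_self i))) ?_
  exact insert_subset_insert subset_union_left (prefMin_mem_insert_one_range g₁ i)

theorem finite_range_min_prefMin (h₁ : (range g₁).Finite) (h₂ : (range g₂).Finite) :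
    (range fun i => min (g₂ i) (prefMin g₁ i)).Finite :=
  ((h₁.union h₂).insert 1).subset (range_min_prefMin_subset g₁ g₂)

theorem iSup_min_prefMin_mem (h₁ : (range g₁).Finite) (h₂ : (range g₂).Finite) :
    (⨆ i, min (g₂ i) (prefMin g₁ i)) ∈ insert 1 (range g₁ ∪ range g₂) :=
  range_min_prefMin_subset g₁ g₂
    ((range_nonempty _).csSup_mem (finite_range_min_prefMin h₁ h₂))

theorem le_iSup_min_prefMin_iff (h₁ : (range g₁).Finite) (h₂ : (range g₂).Finite) (hv : v ≤ 1) :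
    v ≤ (⨆ i, min (g₂ i) (prefMin g₁ i)) ↔ ∃ i, v ≤ g₂ i ∧ ∀ j < i, v ≤ g₁ j := by
  simp only [le_ciSup_iff_of_finite_range (finite_range_min_prefMin h₁ h₂), le_min_iff,
    le_prefMin_iff hv]

end PrefMin

section Variables

theorem varsQF_finite (φ : PropQF AP Var S) : (varsQF φ).Finite := by
  induction φ with
  | tt | ff => exact finite_empty
  | atom _ π => exact finite_singleton π
  | app _ _ ih => exact finite_iUnion ih
  | next _ ih => exact ih
  | untl _ _ ih₁ ih₂ => exact ih₁.union ih₂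

theorem freeVars_finite (ψ : PropForm AP Var S) : (freeVars ψ).Finite := by
  induction ψ with
  | qf φ => exact varsQF_finite φ
  | ex _ _ ih | all _ _ ih => exact ih.sdiff

theorem eqOn_shiftA {s : Set Var} {ρ ρ' : Var → Trace AP} (h : EqOn ρ ρ' s) (i : ℕ) :
    EqOn (shiftA ρ i) (shiftA ρ' i) s :=
  fun _ hπ => funext fun n => congrFun (h hπ) (n + i)

theorem semQF_congr {φ : PropQF AP Var S} {ρ ρ' : Var → Trace AP} (T : Set (Trace AP))
    (h : EqOn ρ ρ' (varsQF φ)) : semQF φ ρ T = semQF φ ρ' T := by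
  induction φ generalizing ρ ρ' with
  | tt | ff => rfl
  | atom p π => simp only [semQF, h (mem_singleton π)]
  | app f args ih =>
    simp only [semQF]
    exact congrArg _ (funext fun i => ih i (h.mono (subset_iUnion (fun i => varsQF (args i)) i)))
  | next φ ih => exact ih (eqOn_shiftA h 1)
  | untl φ₁ φ₂ ih₁ ih₂ =>
    simp only [semQF, fun i => ih₁ (eqOn_shiftA (h.mono subset_union_left) i),
      fun i => ih₂ (eqOn_shiftA (h.mono subset_union_right) i)]

variable [DecidableEq Var]

theorem sem_congr {ψ : PropForm AP Var S} {ρ ρ' : Var → Trace AP} (T : Set (Trace AP))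
    (h : EqOn ρ ρ' (freeVars ψ)) : sem ψ ρ T = sem ψ ρ' T := by
  induction ψ generalizing ρ ρ' with
  | qf φ => exact semQF_congr T h
  | ex π ψ ih | all π ψ ih =>
    have hupdate (t : Trace AP) :
        EqOn (Function.update ρ π t) (Function.update ρ' π t) (freeVars ψ) := by
      intro π' hπ'
      rcases eq_or_ne π' π with rfl | hne
      · simp
      · simpa [hne] using h ⟨hπ', hne⟩
    simp only [sem, fun t => ih (hupdate t)]

theorem sem_update_of_notMem {ψ : PropForm AP Var S} {π : Var} (hπ : π ∉ freeVars ψ)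
    (ρ : Var → Trace AP) (t : Trace AP) (T : Set (Trace AP)) :
    sem ψ (Function.update ρ π t) T = sem ψ ρ T :=
  sem_congr T fun _ hπ' => Function.update_of_ne (ne_of_mem_of_not_mem hπ' hπ) t ρ

theorem sem_update_comp_update {ψ : PropForm AP Var S} {σ : Var → Var} {π π' : Var}
    (hπ' : π' ∉ σ '' (freeVars ψ \ {π})) (ρ : Var → Trace AP) (t : Trace AP)
    (T : Set (Trace AP)) :
    sem ψ (Function.update ρ π' t ∘ Function.update σ π π') T =
      sem ψ (Function.update (ρ ∘ σ) π t) T := by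
  refine sem_congr T fun q hq => ?_
  rcases eq_or_ne q π with rfl | hne
  · simp
  · have hσq : σ q ≠ π' := fun h => hπ' ⟨q, ⟨hq, hne⟩, h⟩
    simp [hne, hσq]

end Variables

section Renaming

variable {Var' : Type}

/-- Renaming the variables of a quantifier-free formula. -/
def PropQF.rename (σ : Var → Var') : PropQF AP Var S → PropQF AP Var' S
  | .tt => .tt
  | .ff => .ff
  | .atom p π => .atom p (σ π)
  | .app f args => .app f fun i => (args i).rename σ
  | .next φ => .next (φ.rename σ)
  | .untl φ₁ φ₂ => .untl (φ₁.rename σ) (φ₂.rename σ)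

theorem varsQF_rename (σ : Var → Var') (φ : PropQF AP Var S) :
    varsQF (φ.rename σ) = σ '' varsQF φ := by
  induction φ with
  | tt | ff => simp [PropQF.rename, varsQF]
  | atom p π => simp [PropQF.rename, varsQF]
  | app f args ih => simp only [PropQF.rename, varsQF, ih, image_iUnion]
  | next _ ih => exact ih
  | untl φ₁ φ₂ ih₁ ih₂ => simp only [PropQF.rename, varsQF, ih₁, ih₂, image_union]

theorem semQF_rename (σ : Var → Var') (φ : PropQF AP Var S) (ρ : Var' → Trace AP)
    (T : Set (Trace AP)) : semQF (φ.rename σ) ρ T = semQF φ (ρ ∘ σ) T := by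
  induction φ generalizing ρ with
  | tt | ff | atom => rfl
  | app f args ih => simp only [PropQF.rename, semQF, ih]
  | next _ ih => exact ih _
  | untl φ₁ φ₂ ih₁ ih₂ =>
    simp only [PropQF.rename, semQF, ih₁, ih₂]
    rfl

theorem image_update_union_diff_singleton [DecidableEq Var] {F : Set Var} {G : Set Var'}
    {σ : Var → Var'} {π : Var} {π' : Var'} (hF : π' ∉ σ '' (F \ {π})) (hG : π' ∉ G) :
    (Function.update σ π π' '' F ∪ G) \ {π'} = σ '' (F \ {π}) ∪ G := by
  have himage : Function.update σ π π' '' F \ {π'} = σ '' (F \ {π}) := by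
    ext r
    constructor
    · rintro ⟨⟨q, hq, rfl⟩, hr⟩
      have hqπ : q ≠ π := by rintro rfl; simp at hr
      exact ⟨q, ⟨hq, hqπ⟩, (Function.update_of_ne hqπ _ _).symm⟩
    · intro hr
      refine ⟨?_, ne_of_mem_of_not_mem hr hF⟩
      obtain ⟨q, ⟨hq, hqπ⟩, rfl⟩ := hr
      exact ⟨q, hq, Function.update_of_ne hqπ _ _⟩
  rw [union_sdiff_distrib, himage, sdiff_singleton_eq_self hG]

end Renaming

/-- An assignment of Boolean traces together with a nonempty set of Boolean traces: the data over
which HyperLTL formulas are evaluated. -/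
structure BoolContext (AP Var : Type) where
  assign : Var → Trace AP
  traces : Set (Trace AP)
  isBool_assign : ∀ π, IsBoolTrace (assign π)
  isBool_traces : ∀ t ∈ traces, IsBoolTrace t
  nonempty : traces.Nonempty

namespace BoolContext

instance (x : BoolContext AP Var) : Nonempty x.traces :=
  x.nonempty.to_subtype

/-- The context at time `i`. -/
def shift (x : BoolContext AP Var) (i : ℕ) : BoolContext AP Var :=
  ⟨shiftA x.assign i, x.traces, fun π n p => x.isBool_assign π (n + i) p,
    x.isBool_traces, x.nonempty⟩

/-- The context in which `π` is bound to the trace `t`. -/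
def update [DecidableEq Var] (x : BoolContext AP Var) (π : Var) (t : x.traces) :
    BoolContext AP Var where
  assign := Function.update x.assign π t
  traces := x.traces
  isBool_assign := (Function.forall_update_iff x.assign fun _ => IsBoolTrace).2
    ⟨x.isBool_traces t t.2, fun q _ => x.isBool_assign q⟩
  isBool_traces := x.isBool_traces
  nonempty := x.nonempty

/-- The context that evaluates a formula as `x` evaluates its renaming along `σ`. -/
def comap {Var' : Type} (σ : Var → Var') (x : BoolContext AP Var') : BoolContext AP Var :=
  ⟨x.assign ∘ σ, x.traces, fun π => x.isBool_assign (σ π), x.isBool_traces, x.nonempty⟩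

end BoolContext

namespace PropQF

/-- The satisfaction value, as a function on Boolean contexts. -/
def value (φ : PropQF AP Var S) (x : BoolContext AP Var) : ℝ :=
  semQF φ x.assign x.traces

theorem finite_range_value_shift {φ : PropQF AP Var S} (h : (range φ.value).Finite)
    (x : BoolContext AP Var) : (range fun i => φ.value (x.shift i)).Finite :=
  h.subset (range_comp_subset_range x.shift φ.value)

theorem value_untl_mem {φ₁ φ₂ : PropQF AP Var S} (h₁ : (range φ₁.value).Finite)
    (h₂ : (range φ₂.value).Finite) (x : BoolContext AP Var) :
    (untl φ₁ φ₂).value x ∈ insert 1 (range φ₁.value ∪ range φ₂.value) :=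
  insert_subset_insert
    (union_subset_union (range_comp_subset_range x.shift φ₁.value)
      (range_comp_subset_range x.shift φ₂.value))
    (iSup_min_prefMin_mem (finite_range_value_shift h₁ x) (finite_range_value_shift h₂ x))

theorem finite_range_value (φ : PropQF AP Var S) : (range φ.value).Finite := by
  induction φ with
  | tt => exact (finite_singleton 1).subset (range_subset_iff.2 fun _ => rfl)
  | ff => exact (finite_singleton 0).subset (range_subset_iff.2 fun _ => rfl)
  | atom p π =>
    exact (toFinite {0, 1}).subset (range_subset_iff.2 fun x => x.isBool_assign π 0 p)
  | app f args ih =>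
    refine ((Finite.pi' ih).image (S.interp f)).subset (range_subset_iff.2 fun x => ?_)
    exact mem_image_of_mem _ fun i => mem_range_self x
  | next φ ih => exact ih.subset (range_subset_iff.2 fun x => mem_range_self (x.shift 1))
  | untl φ₁ φ₂ ih₁ ih₂ =>
    exact ((ih₁.union ih₂).insert 1).subset (range_subset_iff.2 (value_untl_mem ih₁ ih₂))

theorem value_mem_Icc (φ : PropQF AP Var S) (x : BoolContext AP Var) :
    φ.value x ∈ Icc (0 : ℝ) 1 := by
  induction φ generalizing x with
  | tt => exact right_mem_Icc.2 zero_le_one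
  | ff => exact left_mem_Icc.2 zero_le_one
  | atom p π => exact (x.assign π 0 p).2
  | app f args ih => exact S.interp_mem f _ fun i => ih i x
  | next _ ih => exact ih (x.shift 1)
  | untl φ₁ φ₂ ih₁ ih₂ =>
    rcases value_untl_mem φ₁.finite_range_value φ₂.finite_range_value x with
      h | ⟨y, h⟩ | ⟨y, h⟩
    · rw [h]
      exact right_mem_Icc.2 zero_le_one
    · exact h ▸ ih₁ y
    · exact h ▸ ih₂ y

theorem le_value_untl_iff (φ₁ φ₂ : PropQF AP Var S) (x : BoolContext AP Var) {v : ℝ}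
    (hv : v ≤ 1) : v ≤ (untl φ₁ φ₂).value x ↔
      ∃ i, v ≤ φ₂.value (x.shift i) ∧ ∀ j < i, v ≤ φ₁.value (x.shift j) :=
  le_iSup_min_prefMin_iff (finite_range_value_shift φ₁.finite_range_value x)
    (finite_range_value_shift φ₂.finite_range_value x) hv

/-- Negation of HyperLTL formulas. -/
def neg (χ : PropQF AP Var boolSig) : PropQF AP Var boolSig :=
  .app (S := boolSig) BoolFn.neg fun _ => χ

/-- Conjunction of HyperLTL formulas. -/
def conj (χ₁ χ₂ : PropQF AP Var boolSig) : PropQF AP Var boolSig :=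
  .app (S := boolSig) BoolFn.bmin (![χ₁, χ₂] : Fin 2 → PropQF AP Var boolSig)

theorem varsQF_neg (χ : PropQF AP Var boolSig) : varsQF χ.neg = varsQF χ :=
  iUnion_const (ι := Fin 1) _

theorem varsQF_conj (χ₁ χ₂ : PropQF AP Var boolSig) :
    varsQF (χ₁.conj χ₂) = varsQF χ₁ ∪ varsQF χ₂ := by
  ext π
  exact mem_iUnion.trans
    (Fin.exists_fin_two (p := fun i => π ∈ varsQF ((![χ₁, χ₂] : Fin 2 → _) i)))

theorem value_neg (χ : PropQF AP Var boolSig) (x : BoolContext AP Var) :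
    χ.neg.value x = 1 - χ.value x :=
  rfl

theorem value_conj (χ₁ χ₂ : PropQF AP Var boolSig) (x : BoolContext AP Var) :
    (χ₁.conj χ₂).value x = min (χ₁.value x) (χ₂.value x) :=
  rfl

theorem value_eq_zero_or_one (χ : PropQF AP Var boolSig) (x : BoolContext AP Var) :
    χ.value x = 0 ∨ χ.value x = 1 := by
  induction χ generalizing x with
  | tt => exact .inr rfl
  | ff => exact .inl rfl
  | atom p π => exact x.isBool_assign π 0 p
  | app f args ih =>
    cases f with
    | neg =>
      have h := ih (0 : Fin 1) x
      change 1 - (args (0 : Fin 1)).value x = 0 ∨ 1 - (args (0 : Fin 1)).value x = 1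
      grind
    | bmax => exact max_rec' (fun r => r = 0 ∨ r = 1) (ih (0 : Fin 2) x) (ih (1 : Fin 2) x)
    | bmin => exact min_rec' (fun r => r = 0 ∨ r = 1) (ih (0 : Fin 2) x) (ih (1 : Fin 2) x)
  | next _ ih => exact ih (x.shift 1)
  | untl χ₁ χ₂ ih₁ ih₂ =>
    rcases value_untl_mem χ₁.finite_range_value χ₂.finite_range_value x with
      h | ⟨y, h⟩ | ⟨y, h⟩
    · exact .inr h
    · exact h ▸ ih₁ y
    · exact h ▸ ih₂ y

theorem one_le_value_neg_iff (χ : PropQF AP Var boolSig) (x : BoolContext AP Var) :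
    1 ≤ χ.neg.value x ↔ ¬ 1 ≤ χ.value x := by
  rw [value_neg]
  rcases χ.value_eq_zero_or_one x with h | h <;> simp [h]

end PropQF

namespace PropForm

variable [DecidableEq Var]

/-- The satisfaction value, as a function on Boolean contexts. -/
def value (ψ : PropForm AP Var S) (x : BoolContext AP Var) : ℝ :=
  sem ψ x.assign x.traces

theorem value_ex (π : Var) (ψ : PropForm AP Var S) (x : BoolContext AP Var) :
    (ex π ψ).value x = ⨆ t, ψ.value (x.update π t) :=
  sSup_image'

theorem value_all (π : Var) (ψ : PropForm AP Var S) (x : BoolContext AP Var) :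
    (all π ψ).value x = ⨅ t, ψ.value (x.update π t) :=
  sInf_image'

theorem finite_range_value_update {ψ : PropForm AP Var S} (h : (range ψ.value).Finite) (π : Var)
    (x : BoolContext AP Var) : (range fun t => ψ.value (x.update π t)).Finite :=
  h.subset (range_comp_subset_range (x.update π) ψ.value)

theorem exists_range_value_subset (ψ : PropForm AP Var S) :
    ∃ φ : PropQF AP Var S, range ψ.value ⊆ range φ.value := by
  induction ψ with
  | qf φ => exact ⟨φ, Subset.rfl⟩
  | ex π ψ ih =>
    obtain ⟨φ, hφ⟩ := ih
    refine ⟨φ, range_subset_iff.2 fun x => hφ (range_comp_subset_range (x.update π) _ ?_)⟩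
    rw [value_ex]
    exact (range_nonempty _).csSup_mem
      (finite_range_value_update (φ.finite_range_value.subset hφ) π x)
  | all π ψ ih =>
    obtain ⟨φ, hφ⟩ := ih
    refine ⟨φ, range_subset_iff.2 fun x => hφ (range_comp_subset_range (x.update π) _ ?_)⟩
    rw [value_all]
    exact (range_nonempty _).csInf_mem
      (finite_range_value_update (φ.finite_range_value.subset hφ) π x)

theorem finite_range_value (ψ : PropForm AP Var S) : (range ψ.value).Finite := by
  obtain ⟨φ, hφ⟩ := ψ.exists_range_value_subset
  exact φ.finite_range_value.subset hφ

theorem value_le_one (ψ : PropForm AP Var S) (x : BoolContext AP Var) : ψ.value x ≤ 1 := by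
  obtain ⟨φ, hφ⟩ := ψ.exists_range_value_subset
  obtain ⟨y, hy⟩ := hφ (mem_range_self x)
  exact hy ▸ (φ.value_mem_Icc y).2

theorem le_value_ex_iff (π : Var) (ψ : PropForm AP Var S) (x : BoolContext AP Var) {v : ℝ} :
    v ≤ (ex π ψ).value x ↔ ∃ t, v ≤ ψ.value (x.update π t) := by
  rw [value_ex]
  exact le_ciSup_iff_of_finite_range (finite_range_value_update ψ.finite_range_value π x)

theorem le_value_all_iff (π : Var) (ψ : PropForm AP Var S) (x : BoolContext AP Var) {v : ℝ} :
    v ≤ (all π ψ).value x ↔ ∀ t, v ≤ ψ.value (x.update π t) := by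
  rw [value_all]
  exact le_ciInf_iff (finite_range_value_update ψ.finite_range_value π x).bddBelow

theorem value_comap_update {ψ : PropForm AP Var S} {σ : Var → Var} {π π' : Var}
    (hπ' : π' ∉ σ '' (freeVars ψ \ {π})) (x : BoolContext AP Var) (t : x.traces) :
    ψ.value ((x.update π' t).comap (Function.update σ π π')) =
      ψ.value ((x.comap σ).update π t) :=
  sem_update_comp_update hπ' x.assign t x.traces

end PropForm

/-- `A` is the set of Boolean contexts satisfying a quantifier-free HyperLTL formula whose set of
variables is exactly `F`. Satisfaction is written `1 ≤ ·` rather than `· = 1` to match superlevel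
sets. -/
def IsQFDefinable (F : Set Var) (A : Set (BoolContext AP Var)) : Prop :=
  ∃ χ : PropQF AP Var boolSig, varsQF χ = F ∧ χ.value ⁻¹' Ici 1 = A

namespace IsQFDefinable

variable {F G : Set Var} {A B : Set (BoolContext AP Var)}

theorem congr (h : IsQFDefinable F A) (hAB : ∀ x, x ∈ A ↔ x ∈ B) : IsQFDefinable F B :=
  ext hAB ▸ h

theorem univ : IsQFDefinable ∅ (univ : Set (BoolContext AP Var)) :=
  ⟨.tt, rfl, eq_univ_of_forall fun _ => le_refl (1 : ℝ)⟩

theorem compl (h : IsQFDefinable F A) : IsQFDefinable F Aᶜ := by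
  obtain ⟨χ, rfl, rfl⟩ := h
  exact ⟨χ.neg, χ.varsQF_neg, ext χ.one_le_value_neg_iff⟩

theorem inter (hA : IsQFDefinable F A) (hB : IsQFDefinable G B) :
    IsQFDefinable (F ∪ G) (A ∩ B) := by
  obtain ⟨χ₁, rfl, rfl⟩ := hA
  obtain ⟨χ₂, rfl, rfl⟩ := hB
  refine ⟨χ₁.conj χ₂, χ₁.varsQF_conj χ₂, ext fun x => ?_⟩
  simp only [mem_preimage, mem_inter_iff, mem_Ici, PropQF.value_conj, le_min_iff]

theorem next (h : IsQFDefinable F A) : IsQFDefinable F {x | x.shift 1 ∈ A} := by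
  obtain ⟨χ, rfl, rfl⟩ := h
  exact ⟨.next χ, rfl, rfl⟩

theorem untl (hA : IsQFDefinable F A) (hB : IsQFDefinable G B) :
    IsQFDefinable (F ∪ G) {x | ∃ i, x.shift i ∈ B ∧ ∀ j < i, x.shift j ∈ A} := by
  obtain ⟨χ₁, rfl, rfl⟩ := hA
  obtain ⟨χ₂, rfl, rfl⟩ := hB
  exact ⟨.untl χ₁ χ₂, rfl, ext fun x => χ₁.le_value_untl_iff χ₂ x le_rfl⟩

theorem comap {Var' : Type} (h : IsQFDefinable F A) (σ : Var → Var') :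
    IsQFDefinable (σ '' F) {x | x.comap σ ∈ A} := by
  obtain ⟨χ, rfl, rfl⟩ := h
  refine ⟨χ.rename σ, varsQF_rename σ χ, ext fun x => ?_⟩
  exact iff_of_eq (congrArg (1 ≤ ·) (semQF_rename σ χ x.assign x.traces))

theorem iInter {n : ℕ} {F : Fin n → Set Var} {A : Fin n → Set (BoolContext AP Var)}
    (h : ∀ i, IsQFDefinable (F i) (A i)) : IsQFDefinable (⋃ i, F i) (⋂ i, A i) := by
  induction n with
  | zero => simpa using univ
  | succ n ih =>
    convert (h 0).inter (ih fun i => h i.succ) using 1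
    · ext; simp [Fin.exists_fin_succ]
    · ext; simp [Fin.forall_fin_succ]

/-- `A` only witnesses that some HyperLTL formula has exactly the variables `F`; the empty set is
then defined by a contradiction over `F`. -/
theorem isSetAlgebra (h : IsQFDefinable F A) :
    MeasureTheory.IsSetAlgebra {B : Set (BoolContext AP Var) | IsQFDefinable F B} where
  empty_mem := by simpa using h.inter h.compl
  compl_mem _ hB := hB.compl
  union_mem B C hB hC := by simpa [compl_inter] using (hB.compl.inter hC.compl).compl

end IsQFDefinable

/-- `A` is the set of Boolean contexts satisfying a HyperLTL formula whose set of free variables is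
exactly `F`. -/
def IsDefinable [DecidableEq Var] (F : Set Var) (A : Set (BoolContext AP Var)) : Prop :=
  ∃ χ : PropForm AP Var boolSig, freeVars χ = F ∧ χ.value ⁻¹' Ici 1 = A

theorem IsQFDefinable.isDefinable [DecidableEq Var] {F : Set Var} {A : Set (BoolContext AP Var)}
    (h : IsQFDefinable F A) : IsDefinable F A := by
  obtain ⟨χ, hvars, hχ⟩ := h
  exact ⟨.qf χ, hvars, hχ⟩

namespace IsDefinable

variable [DecidableEq Var] {F G : Set Var} {A B : Set (BoolContext AP Var)}

theorem congr (h : IsDefinable F A) (hAB : ∀ x, x ∈ A ↔ x ∈ B) : IsDefinable F B :=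
  ext hAB ▸ h

theorem finite (h : IsDefinable F A) : F.Finite := by
  obtain ⟨χ, rfl, -⟩ := h
  exact freeVars_finite χ

theorem ex (h : IsDefinable F A) (π : Var) :
    IsDefinable (F \ {π}) {x | ∃ t, x.update π t ∈ A} := by
  obtain ⟨χ, rfl, rfl⟩ := h
  exact ⟨.ex π χ, rfl, ext fun x => χ.le_value_ex_iff π x⟩

theorem all (h : IsDefinable F A) (π : Var) :
    IsDefinable (F \ {π}) {x | ∀ t, x.update π t ∈ A} := by
  obtain ⟨χ, rfl, rfl⟩ := h
  exact ⟨.all π χ, rfl, ext fun x => χ.le_value_all_iff π x⟩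

theorem compl (h : IsDefinable F A) : IsDefinable F Aᶜ := by
  obtain ⟨χ, rfl, rfl⟩ := h
  induction χ with
  | qf χ => exact (IsQFDefinable.compl ⟨χ, rfl, rfl⟩).isDefinable
  | ex π χ ih =>
    exact (ih.all π).congr fun x => ((χ.le_value_ex_iff π x).not.trans not_exists).symm
  | all π χ ih =>
    exact (ih.ex π).congr fun x => ((χ.le_value_all_iff π x).not.trans not_forall).symm

theorem update_mem_iff (h : IsDefinable F A) {π : Var} (hπ : π ∉ F) (x : BoolContext AP Var)
    (t : x.traces) : x.update π t ∈ A ↔ x ∈ A := by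
  obtain ⟨χ, rfl, rfl⟩ := h
  exact iff_of_eq (congrArg (1 ≤ ·) (sem_update_of_notMem hπ x.assign t x.traces))

/-- The quantifiers of `χ` are moved in front of the conjunction one at a time, each binding a fresh
variable; `σ` accumulates the renaming of the variables of the matrix. -/
theorem comap_inter [Infinite Var] (hB : IsDefinable G B)
    (hqf : ∀ {F A}, IsQFDefinable F A → IsDefinable (F ∪ G) (A ∩ B))
    (χ : PropForm AP Var boolSig) (σ : Var → Var) :
    IsDefinable (σ '' freeVars χ ∪ G) ({x | 1 ≤ χ.value (x.comap σ)} ∩ B) := by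
  induction χ generalizing σ with
  | qf χ => exact hqf (IsQFDefinable.comap ⟨χ, rfl, rfl⟩ σ)
  | ex π χ ih =>
    obtain ⟨π', hπ'⟩ :=
      (((freeVars_finite (.ex π χ)).image σ).union hB.finite).exists_notMem
    obtain ⟨hχ, hG⟩ := not_or.1 hπ'
    have hex := (ih (Function.update σ π π')).ex π'
    rw [image_update_union_diff_singleton hχ hG] at hex
    refine hex.congr fun x => ?_
    simp only [mem_inter_iff, mem_ofPred_eq, PropForm.value_comap_update hχ,
      hB.update_mem_iff hG, exists_and_right, PropForm.le_value_ex_iff]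
    rfl
  | all π χ ih =>
    obtain ⟨π', hπ'⟩ :=
      (((freeVars_finite (.all π χ)).image σ).union hB.finite).exists_notMem
    obtain ⟨hχ, hG⟩ := not_or.1 hπ'
    have hall := (ih (Function.update σ π π')).all π'
    rw [image_update_union_diff_singleton hχ hG] at hall
    refine hall.congr fun x => ?_
    simp only [mem_inter_iff, mem_ofPred_eq, PropForm.value_comap_update hχ,
      hB.update_mem_iff hG, forall_and, forall_const, PropForm.le_value_all_iff]
    rfl

theorem inter_of_forall_isQFDefinable [Infinite Var] (hA : IsDefinable F A)
    (hB : IsDefinable G B)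
    (hqf : ∀ {F A}, IsQFDefinable F A → IsDefinable (F ∪ G) (A ∩ B)) :
    IsDefinable (F ∪ G) (A ∩ B) := by
  obtain ⟨χ, rfl, rfl⟩ := hA
  have h := hB.comap_inter hqf χ id
  rwa [image_id] at h

theorem inter [Infinite Var] (hA : IsDefinable F A) (hB : IsDefinable G B) :
    IsDefinable (F ∪ G) (A ∩ B) := by
  refine hA.inter_of_forall_isQFDefinable hB fun hA => ?_
  rw [union_comm, inter_comm]
  exact hB.inter_of_forall_isQFDefinable hA.isDefinable fun hB => (hB.inter hA).isDefinable

theorem isSetAlgebra [Infinite Var] (h : IsDefinable F A) :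
    MeasureTheory.IsSetAlgebra {B : Set (BoolContext AP Var) | IsDefinable F B} where
  empty_mem := by simpa using h.inter h.compl
  compl_mem _ hB := hB.compl
  union_mem B C hB hC := by simpa [compl_inter] using (hB.compl.inter hC.compl).compl

end IsDefinable

theorem PropQF.isQFDefinable_preimage_value (φ : PropQF AP Var S) (P : Set ℝ) :
    IsQFDefinable (varsQF φ) (φ.value ⁻¹' P) := by
  induction φ generalizing P with
  | tt | ff =>
    refine preimage_mem_of_fiber_mem IsQFDefinable.univ.isSetAlgebra (finite_range_value _) ?_ P
    rintro _ ⟨x, rfl⟩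
    exact IsQFDefinable.univ.congr fun y => iff_of_true trivial rfl
  | atom p π =>
    have hatom : IsQFDefinable {π} ((atom p π : PropQF AP Var S).value ⁻¹' Ici 1) :=
      ⟨.atom p π, rfl, rfl⟩
    refine preimage_mem_of_superlevel_mem hatom.isSetAlgebra (finite_range_value _) ?_ P
    rintro _ ⟨x, rfl⟩
    rcases x.isBool_assign π 0 p with h | h
    · refine IsQFDefinable.congr hatom.isSetAlgebra.univ_mem fun y => iff_of_true trivial ?_
      exact h.le.trans (value_mem_Icc _ y).1
    · exact hatom.congr fun y => (by rw [mem_preimage, mem_preimage, ← h]; rfl)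
  | app f args ih =>
    let argValues (x : BoolContext AP Var) (i : Fin (S.arity f)) : ℝ := (args i).value x
    have hfiber (v : Fin (S.arity f) → ℝ) :
        IsQFDefinable (⋃ i, varsQF (args i)) (argValues ⁻¹' {v}) := by
      convert IsQFDefinable.iInter fun i => ih i {v i} using 1
      ext x
      simp [argValues, funext_iff]
    have hfinite : (range argValues).Finite :=
      (Finite.pi' fun i => (args i).finite_range_value).subset
        (range_subset_iff.2 fun x i => mem_range_self x)
    exact preimage_mem_of_fiber_mem (hfiber 0).isSetAlgebra hfinite (fun v _ => hfiber v)
      (S.interp f ⁻¹' P)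
  | next φ ih => exact (ih P).next
  | untl φ₁ φ₂ ih₁ ih₂ =>
    refine preimage_mem_of_superlevel_mem ((ih₁ ∅).untl (ih₂ ∅)).isSetAlgebra
      (finite_range_value _) ?_ P
    rintro v ⟨y, hy⟩
    have hv : v ≤ 1 := hy ▸ (value_mem_Icc _ y).2
    exact ((ih₁ (Ici v)).untl (ih₂ (Ici v))).congr fun x => (φ₁.le_value_untl_iff φ₂ x hv).symm

theorem PropForm.isDefinable_preimage_value [DecidableEq Var] [Infinite Var]
    (ψ : PropForm AP Var S) (P : Set ℝ) : IsDefinable (freeVars ψ) (ψ.value ⁻¹' P) := by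
  induction ψ generalizing P with
  | qf φ => exact (φ.isQFDefinable_preimage_value P).isDefinable
  | ex π ψ ih =>
    refine preimage_mem_of_superlevel_mem ((ih ∅).ex π).isSetAlgebra (finite_range_value _)
      (fun v _ => ?_) P
    exact ((ih (Ici v)).ex π).congr fun x => (ψ.le_value_ex_iff π x).symm
  | all π ψ ih =>
    refine preimage_mem_of_superlevel_mem ((ih ∅).all π).isSetAlgebra (finite_range_value _)
      (fun v _ => ?_) P
    exact ((ih (Ici v)).all π).congr fun x => (ψ.le_value_all_iff π x).symm

/-- For every `P ⊆ [0,1]` and every HyperLTL_prop formula `ψ`, there is a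
HyperLTL formula `Bool(ψ,P)` (over the Boolean signature `max`, `min`, `x ↦ 1 - x`) with the
same free variables such that, over Boolean traces, `⟦ψ⟧_Π^T ∈ P ↔ ⟦Bool(ψ,P)⟧_Π^T = 1`. -/
theorem stmt_4 {AP Var : Type} [DecidableEq Var] [Infinite Var] {S : PropSig}
    (P : Set ℝ) (hP : P ⊆ Set.Icc (0:ℝ) 1) (ψ : PropForm AP Var S) :
    ∃ χ : PropForm AP Var boolSig,
      freeVars χ = freeVars ψ ∧
      ∀ (ρ : Var → Trace AP) (T : Set (Trace AP)),
        (∀ π, IsBoolTrace (ρ π)) → T ⊆ {t | IsBoolTrace t} → T.Nonempty →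
        (sem ψ ρ T ∈ P ↔ sem χ ρ T = 1) := by
  obtain ⟨χ, hfree, hχ⟩ := ψ.isDefinable_preimage_value (AP := AP) P
  refine ⟨χ, hfree, fun ρ T hρ hT hne => ?_⟩
  let x : BoolContext AP Var := ⟨ρ, T, hρ, hT, hne⟩
  calc
    ψ.value x ∈ P ↔ 1 ≤ χ.value x := (Set.ext_iff.1 hχ x).symm
    _ ↔ χ.value x = 1 := (χ.value_le_one x).ge_iff_eq

end
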